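/- Let X be a Polish space, Z ⊆ X × Y closed, μ̄₀ a Borel probability measure on Z with first marginal m₀ ∈ 𝒫¹(X), and m₁ ∈ 𝒫¹(X). Then the optimal transport problem inf over ν ∈ 𝒫(Z × X) with π₁₂#ν = μ̄₀ and π₃#ν = m₁ of ∫ d_X(x, x') dν(x, y, x') has a solution, and its value equals the Kantorovich–Rubinstein distance d₁(m₀, m₁). -/

import Mathlib

open MeasureTheory
open scoped ENNReal

theorem finite_duality {ι : Type*} [Fintype ι] [DecidableEq ι] (c : ι → ι → ℝ) (p q : ι → ℝ)
    (hp : ∀ i, 0 ≤ p i) (hq : ∀ i, 0 ≤ q i) (hp1 : ∑ i, p i = 1) (hq1 : ∑ i, q i = 1) (C : ℝ)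
    (h : ∀ φ ψ : ι → ℝ, (∀ i j, φ i + ψ j ≤ c i j) → ∑ i, φ i * p i + ∑ j, ψ j * q j ≤ C) :
    ∃ π : ι → ι → ℝ, (∀ i j, 0 ≤ π i j) ∧ (∀ i, ∑ j, π i j = p i) ∧ (∀ j, ∑ i, π i j = q j) ∧
      ∑ i, ∑ j, π i j * c i j ≤ C := by
  classical
  let A : (ι × ι → ℝ) →ₗ[ℝ] ((ι → ℝ) × (ι → ℝ) × ℝ) :=
    { toFun := fun π => (fun i => ∑ j, π (i, j), fun j => ∑ i, π (i, j),
        ∑ i, ∑ j, π (i, j) * c i j)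
      map_add' := by
        intro x y
        ext <;> simp [Finset.sum_add_distrib, add_mul]
      map_smul' := by
        intro r x
        ext <;> simp [Finset.mul_sum, mul_assoc] }
  have hA : Continuous A := A.continuous_of_finiteDimensional
  by_contra hcon
  have hdisj : Disjoint (A '' stdSimplex ℝ (ι × ι)) (({p} : Set (ι → ℝ)) ×ˢ (({q} : Set (ι → ℝ)) ×ˢ Set.Iic C)) := by
    rw [Set.disjoint_left]
    rintro _ ⟨π, hπ, rfl⟩ hmem
    apply hcon
    obtain ⟨h1, h2, h3⟩ := hmem
    refine ⟨fun i j => π (i, j), fun i j => hπ.1 _, fun i => congrFun h1 i, fun j => congrFun h2 j, h3⟩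
  obtain ⟨f, u, v, hu, huv, hv⟩ := geometric_hahn_banach_compact_closed
    ((convex_stdSimplex ℝ (ι × ι)).is_linear_image A.isLinear) ((isCompact_stdSimplex ℝ (ι × ι)).image hA)
    ((convex_singleton p).prod ((convex_singleton q).prod (convex_Iic C)))
    (isClosed_singleton.prod (isClosed_singleton.prod isClosed_Iic)) hdisj
  set w : ℝ := f (0, 0, 1) with hw
  set a : ι → ℝ := fun i => f (Pi.single i 1, 0, 0) with ha
  set b : ι → ℝ := fun i => f (0, Pi.single i 1, 0) with hb
  have hfa : ∀ x : ι → ℝ, f (x, 0, 0) = ∑ i, a i * x i := by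
    intro x
    have := LinearMap.pi_apply_eq_sum_univ (f.toLinearMap ∘ₗ LinearMap.inl ℝ (ι → ℝ) ((ι → ℝ) × ℝ)) x
    simp only [LinearMap.comp_apply, LinearMap.inl_apply, ContinuousLinearMap.coe_coe, smul_eq_mul] at this
    rw [show ((0 : (ι → ℝ) × ℝ)) = (0, 0) from rfl] at this
    rw [this]
    refine Finset.sum_congr rfl fun i _ => ?_
    rw [mul_comm]
    simp only [ha]
    congr 3
    ext j
    simp [Pi.single_apply, eq_comm]
  have hfb : ∀ x : ι → ℝ, f (0, x, 0) = ∑ i, b i * x i := by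
    intro x
    have := LinearMap.pi_apply_eq_sum_univ (f.toLinearMap ∘ₗ LinearMap.inr ℝ (ι → ℝ) ((ι → ℝ) × ℝ) ∘ₗ LinearMap.inl ℝ (ι → ℝ) ℝ) x
    simp only [LinearMap.comp_apply, LinearMap.inl_apply, LinearMap.inr_apply, ContinuousLinearMap.coe_coe, smul_eq_mul] at this
    rw [this]
    refine Finset.sum_congr rfl fun i _ => ?_
    rw [mul_comm]
    simp only [hb]
    congr 4
    ext j
    simp [Pi.single_apply, eq_comm]
  have hf : ∀ (x y : ι → ℝ) (z : ℝ), f (x, y, z) = ∑ i, a i * x i + ∑ i, b i * y i + z * w := by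
    intro x y z
    rw [← hfa, ← hfb, hw, ← smul_eq_mul, ← map_smul, ← map_add, ← map_add]
    simp
  have h1 : ∀ i j, a i + b j + c i j * w < u := by
    intro i j
    have := hu _ ⟨Pi.single (i, j) 1, single_mem_stdSimplex ℝ (i, j), rfl⟩
    have e : A (Pi.single (i, j) 1) = (Pi.single i 1, Pi.single j 1, c i j) := by
      simp only [A, LinearMap.coe_mk, AddHom.coe_mk]
      ext k <;> simp [Pi.single_apply, Prod.ext_iff, ite_and, eq_comm]
    rw [e, hf] at this
    simpa [Pi.single_apply] using this
  have h2 : ∀ k : ℝ, 0 ≤ k → v < ∑ i, a i * p i + ∑ i, b i * q i + (C - k) * w := by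
    intro k hk
    have := hv (p, q, C - k) ⟨rfl, rfl, by simpa using hk⟩
    rwa [hf] at this
  have hsum : ∑ i, a i * p i + ∑ i, b i * q i + w * 0 = ∑ i, ∑ j, (a i + b j) * (p i * q j) := by
    have : ∀ i, ∑ j, (a i + b j) * (p i * q j) = a i * p i + p i * ∑ j, b j * q j := by
      intro i
      rw [Finset.mul_sum, ← mul_one (a i * p i), ← hq1, Finset.mul_sum, ← Finset.sum_add_distrib]
      exact Finset.sum_congr rfl fun j _ => by ring
    simp only [this, Finset.sum_add_distrib, ← Finset.sum_mul, hp1]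
    ring
  have hw0 : w ≤ 0 := by
    by_contra! hw0
    have := h2 (((∑ i, a i * p i + ∑ i, b i * q i + C * w - v) ⊔ 0) / w) (by positivity)
    have e : (C - ((∑ i, a i * p i + ∑ i, b i * q i + C * w - v) ⊔ 0) / w) * w
      = C * w - ((∑ i, a i * p i + ∑ i, b i * q i + C * w - v) ⊔ 0) := by
      field_simp
    rw [e] at this
    have := le_max_left (∑ i, a i * p i + ∑ i, b i * q i + C * w - v) 0
    linarith
  have h20 := h2 0 le_rfl
  rcases hw0.lt_or_eq with hw0 | hw0
  · have := h (fun i => (a i - u) / (-w)) (fun j => b j / (-w)) (fun i j => by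
      rw [← add_div, div_le_iff₀ (by linarith)]
      linarith [h1 i j])
    have e1 : ∑ i, (a i - u) / (-w) * p i = (∑ i, a i * p i - u) / (-w) := by
      have hu' : ∑ i, u * p i = u := by rw [← Finset.mul_sum, hp1, mul_one]
      conv_rhs => rw [← hu', ← Finset.sum_sub_distrib, Finset.sum_div]
      exact Finset.sum_congr rfl fun i _ => by ring
    have e2 : ∑ i, b i / (-w) * q i = (∑ i, b i * q i) / (-w) := by
      rw [Finset.sum_div]
      exact Finset.sum_congr rfl fun i _ => by ring
    rw [e1, e2, ← add_div, div_le_iff₀ (by linarith)] at this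
    linarith
  · have : ∑ i, ∑ j, (a i + b j) * (p i * q j) ≤ ∑ i, ∑ j, u * (p i * q j) := by
      gcongr with i _ j _
      · exact mul_nonneg (hp i) (hq j)
      · have := h1 i j
        rw [hw0] at this
        linarith
    simp only [← Finset.mul_sum, hq1, hp1, mul_one] at this
    simp only [hw0] at *
    linarith

theorem lintegral_finite {A ι : Type*} [MeasurableSpace A] [Fintype ι] [MeasurableSpace ι]
    [MeasurableSingletonClass ι] (μ : Measure A) (T : A → ι) (hT : Measurable T) (h : ι → ℝ≥0∞) :
    ∫⁻ x, h (T x) ∂μ = ∑ i, h i * μ (T ⁻¹' {i}) := by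
  rw [← lintegral_map (measurable_of_finite h) hT, lintegral_fintype]
  refine Finset.sum_congr rfl fun i _ => ?_
  rw [Measure.map_apply hT (measurableSet_singleton i)]

theorem integral_finite {A ι : Type*} [MeasurableSpace A] [Fintype ι] [MeasurableSpace ι]
    [MeasurableSingletonClass ι] (μ : Measure A) [IsProbabilityMeasure μ]
    (T : A → ι) (hT : Measurable T) (h : ι → ℝ) :
    ∫ x, h (T x) ∂μ = ∑ i, h i * μ.real (T ⁻¹' {i}) := by
  have : IsProbabilityMeasure (μ.map T) := Measure.isProbabilityMeasure_map hT.aemeasurable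
  rw [← integral_map (φ := T) hT.aemeasurable (measurable_of_finite h).aestronglyMeasurable,
    integral_fintype Integrable.of_finite]
  refine Finset.sum_congr rfl fun i _ => ?_
  rw [map_measureReal_apply hT (measurableSet_singleton i), smul_eq_mul, mul_comm]

theorem integrable_finite {A ι : Type*} [MeasurableSpace A] [Fintype ι] [MeasurableSpace ι]
    [MeasurableSingletonClass ι] (μ : Measure A) [IsProbabilityMeasure μ]
    (T : A → ι) (hT : Measurable T) (h : ι → ℝ) : Integrable (fun x => h (T x)) μ := by
  have : IsProbabilityMeasure (μ.map T) := Measure.isProbabilityMeasure_map hT.aemeasurable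
  exact (Integrable.of_finite (μ := μ.map T) (f := h)).comp_measurable hT

theorem withDensity_fst {A B : Type*} [MeasurableSpace A] [MeasurableSpace B]
    (μ : Measure A) (ν : Measure B) [IsProbabilityMeasure μ] [IsProbabilityMeasure ν]
    (g : A × B → ℝ≥0∞) (hg : Measurable g) (h : ∀ᵐ a ∂μ, ∫⁻ b, g (a, b) ∂ν = 1) :
    ((μ.prod ν).withDensity g).map Prod.fst = μ := by
  ext s hs
  rw [Measure.map_apply measurable_fst hs, withDensity_apply _ (measurable_fst hs),
    ← Set.prod_univ, ← Measure.prod_restrict, lintegral_prod _ hg.aemeasurable]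
  simp only [Measure.restrict_univ]
  rw [lintegral_congr_ae (ae_restrict_of_ae h)]
  simp

theorem withDensity_snd {A B : Type*} [MeasurableSpace A] [MeasurableSpace B]
    (μ : Measure A) (ν : Measure B) [IsProbabilityMeasure μ] [IsProbabilityMeasure ν]
    (g : A × B → ℝ≥0∞) (hg : Measurable g) (h : ∀ᵐ b ∂ν, ∫⁻ a, g (a, b) ∂μ = 1) :
    ((μ.prod ν).withDensity g).map Prod.snd = ν := by
  ext s hs
  rw [Measure.map_apply measurable_snd hs, withDensity_apply _ (measurable_snd hs),
    ← Set.univ_prod, ← Measure.prod_restrict, lintegral_prod_symm _ hg.aemeasurable]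
  simp only [Measure.restrict_univ]
  rw [lintegral_congr_ae (ae_restrict_of_ae h)]
  simp

theorem ae_fiber_pos {A ι : Type*} [MeasurableSpace A] [Finite ι] (μ : Measure A)
    (T : A → ι) : ∀ᵐ a ∂μ, μ (T ⁻¹' {T a}) ≠ 0 := by
  have : ∀ᵐ a ∂μ, ∀ i, μ (T ⁻¹' {i}) = 0 → a ∉ T ⁻¹' {i} := by
    rw [ae_all_iff]
    intro i
    by_cases h : μ (T ⁻¹' {i}) = 0
    · filter_upwards [measure_eq_zero_iff_ae_notMem.1 h] with a ha _ using ha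
    · exact .of_forall fun a h' => absurd h' h
  filter_upwards [this] with a ha h
  exact ha _ h rfl

/-- Lifting a finite coupling. -/
theorem lift_coupling {A B ι : Type*} [MeasurableSpace A] [MeasurableSpace B] [Fintype ι]
    [MeasurableSpace ι] [MeasurableSingletonClass ι]
    (μ : Measure A) (ν : Measure B) [IsProbabilityMeasure μ] [IsProbabilityMeasure ν]
    (S : A → ι) (T : B → ι) (hS : Measurable S) (hT : Measurable T) (π : ι → ι → ℝ)
    (h0 : ∀ i j, 0 ≤ π i j) (h1 : ∀ i, ∑ j, π i j = μ.real (S ⁻¹' {i}))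
    (h2 : ∀ j, ∑ i, π i j = ν.real (T ⁻¹' {j})) (c : ι → ι → ℝ) (hc : ∀ i j, 0 ≤ c i j) :
    ∃ γ : Measure (A × B), γ.map Prod.fst = μ ∧ γ.map Prod.snd = ν ∧
      ∫⁻ z, ENNReal.ofReal (c (S z.1) (T z.2)) ∂γ = ENNReal.ofReal (∑ i, ∑ j, π i j * c i j) := by
  set p : ι → ℝ := fun i => μ.real (S ⁻¹' {i}) with hp
  set q : ι → ℝ := fun i => ν.real (T ⁻¹' {i}) with hq
  have hpE : ∀ i, μ (S ⁻¹' {i}) = ENNReal.ofReal (p i) := fun i => by simp [p]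
  have hqE : ∀ i, ν (T ⁻¹' {i}) = ENNReal.ofReal (q i) := fun i => by simp [q]
  have hp0 : ∀ i, 0 ≤ p i := fun i => measureReal_nonneg
  have hq0 : ∀ i, 0 ≤ q i := fun i => measureReal_nonneg
  have z1 : ∀ i j, p i = 0 → π i j = 0 := fun i j h => by
    have := (Finset.sum_eq_zero_iff_of_nonneg (fun j _ => h0 i j)).1 ((h1 i).trans h)
    exact this j (Finset.mem_univ _)
  have z2 : ∀ i j, q j = 0 → π i j = 0 := fun i j h => by
    have := (Finset.sum_eq_zero_iff_of_nonneg (fun i _ => h0 i j)).1 ((h2 j).trans h)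
    exact this i (Finset.mem_univ _)
  let G : ι × ι → ℝ≥0∞ := fun k => ENNReal.ofReal (π k.1 k.2 / (p k.1 * q k.2))
  have hST : Measurable (fun z : A × B => (S z.1, T z.2)) := by fun_prop
  have hg : Measurable (fun z : A × B => G (S z.1, T z.2)) := (measurable_of_finite G).comp hST
  refine ⟨(μ.prod ν).withDensity (fun z => G (S z.1, T z.2)), withDensity_fst _ _ _ hg ?_,
    withDensity_snd _ _ _ hg ?_, ?_⟩
  · filter_upwards [ae_fiber_pos μ S] with a ha
    rw [lintegral_finite ν T hT (fun j => G (S a, j))]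
    have hpa : p (S a) ≠ 0 := fun h => ha (by rw [hpE, h]; simp)
    have : ∀ j, G (S a, j) * ν (T ⁻¹' {j}) = ENNReal.ofReal (π (S a) j / p (S a)) := by
      intro j
      rw [hqE, ← ENNReal.ofReal_mul (div_nonneg (h0 _ _) (mul_nonneg (hp0 _) (hq0 _)))]
      congr 1
      by_cases hqj : q j = 0
      · simp [hqj, z2 _ _ hqj]
      · field_simp
    simp only [this]
    rw [← ENNReal.ofReal_sum_of_nonneg (fun j _ => div_nonneg (h0 _ _) (hp0 _)),
      ← Finset.sum_div, h1, div_self hpa, ENNReal.ofReal_one]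
  · filter_upwards [ae_fiber_pos ν T] with b hb
    rw [lintegral_finite μ S hS (fun i => G (i, T b))]
    have hqb : q (T b) ≠ 0 := fun h => hb (by rw [hqE, h]; simp)
    have : ∀ i, G (i, T b) * μ (S ⁻¹' {i}) = ENNReal.ofReal (π i (T b) / q (T b)) := by
      intro j
      rw [hpE, ← ENNReal.ofReal_mul (div_nonneg (h0 _ _) (mul_nonneg (hp0 _) (hq0 _)))]
      congr 1
      by_cases hqj : p j = 0
      · simp [hqj, z1 _ _ hqj]
      · field_simp
    simp only [this]
    rw [← ENNReal.ofReal_sum_of_nonneg (fun j _ => div_nonneg (h0 _ _) (hq0 _)),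
      ← Finset.sum_div, h2, div_self hqb, ENNReal.ofReal_one]
  · have hcm : Measurable (fun z : A × B => ENNReal.ofReal (c (S z.1) (T z.2))) :=
      (measurable_of_finite (fun k : ι × ι => ENNReal.ofReal (c k.1 k.2))).comp hST
    rw [lintegral_withDensity_eq_lintegral_mul _ hg hcm]
    refine (lintegral_finite _ _ hST (fun k => G k * ENNReal.ofReal (c k.1 k.2))).trans ?_
    rw [Fintype.sum_prod_type,
      ENNReal.ofReal_sum_of_nonneg (fun i _ => Finset.sum_nonneg fun j _ => mul_nonneg (h0 _ _) (hc _ _))]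
    refine Finset.sum_congr rfl fun i _ => ?_
    rw [ENNReal.ofReal_sum_of_nonneg (fun j _ => mul_nonneg (h0 _ _) (hc _ _))]
    refine Finset.sum_congr rfl fun j _ => ?_
    have : (fun z : A × B => (S z.1, T z.2)) ⁻¹' {(i, j)} = (S ⁻¹' {i}) ×ˢ (T ⁻¹' {j}) := by
      ext z; simp
    rw [this, Measure.prod_prod, hpE, hqE, ← ENNReal.ofReal_mul (hp0 _),
      ← ENNReal.ofReal_mul (div_nonneg (h0 _ _) (mul_nonneg (hp0 _) (hq0 _))),
      ← ENNReal.ofReal_mul (mul_nonneg (div_nonneg (h0 _ _) (mul_nonneg (hp0 _) (hq0 _))) (hc _ _))]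
    congr 1
    by_cases hpi : p i = 0
    · simp [z1 i j hpi]
    by_cases hqj : q j = 0
    · simp [z2 i j hqj]
    simp only
    field_simp

theorem integrable_dist_any {X : Type*} [MetricSpace X] [SecondCountableTopology X]
    [MeasurableSpace X] [BorelSpace X] (m : Measure X) [IsProbabilityMeasure m]
    (hm : ∃ x₀ : X, Integrable (fun x => dist x x₀) m) (x₁ : X) :
    Integrable (fun x => dist x x₁) m := by
  obtain ⟨x₀, h⟩ := hm
  refine (h.add (integrable_const (dist x₀ x₁))).mono' (by fun_prop) (.of_forall fun x => ?_)
  rw [Real.norm_of_nonneg dist_nonneg]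
  exact dist_triangle _ _ _

theorem integrable_lip {X : Type*} [MetricSpace X] [SecondCountableTopology X]
    [MeasurableSpace X] [BorelSpace X] (m : Measure X) [IsProbabilityMeasure m]
    (hm : ∃ x₀ : X, Integrable (fun x => dist x x₀) m) (F : X → ℝ) (hF : LipschitzWith 1 F) :
    Integrable F m := by
  obtain ⟨x₀, h⟩ := hm
  refine (h.add (integrable_const |F x₀|)).mono' hF.continuous.aestronglyMeasurable (.of_forall fun x => ?_)
  have h1 := hF.dist_le_mul x x₀
  rw [Real.dist_eq] at h1
  have h2 := abs_sub_abs_le_abs_sub (F x) (F x₀)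
  simp only [NNReal.coe_one, one_mul] at h1
  simp only [Real.norm_eq_abs, Pi.add_apply]
  linarith

theorem weak_duality {A X : Type*} [MeasurableSpace A] [MetricSpace X] [SecondCountableTopology X]
    [MeasurableSpace X] [BorelSpace X] (f : A → X) (hf : Measurable f)
    (μ : Measure A) (m1 : Measure X) [IsProbabilityMeasure μ] [IsProbabilityMeasure m1]
    (hm0 : ∃ x₀ : X, Integrable (fun x => dist x x₀) (μ.map f))
    (hm1 : ∃ x₀ : X, Integrable (fun x => dist x x₀) m1)
    (γ : Measure (A × X)) (h1 : γ.map Prod.fst = μ) (h2 : γ.map Prod.snd = m1)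
    (F : X → ℝ) (hF : LipschitzWith 1 F) :
    ∫ x, F x ∂(μ.map f) - ∫ x, F x ∂m1 ≤ ∫ z, dist (f z.1) z.2 ∂γ := by
  have hP : IsProbabilityMeasure (μ.map f) := Measure.isProbabilityMeasure_map hf.aemeasurable
  have hf1 : Measurable (fun z : A × X => f z.1) := by fun_prop
  have e0 : γ.map (fun z : A × X => f z.1) = μ.map f := by
    rw [← h1, Measure.map_map hf measurable_fst]; rfl
  have I0 : ∀ g : X → ℝ, Integrable g (μ.map f) → Integrable (fun z : A × X => g (f z.1)) γ := by
    intro g hg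
    rw [← e0] at hg
    exact hg.comp_measurable hf1
  have I1 : ∀ g : X → ℝ, Integrable g m1 → Integrable (fun z : A × X => g z.2) γ := by
    intro g hg
    rw [← h2] at hg
    exact hg.comp_measurable measurable_snd
  have iF0 := integrable_lip _ hm0 F hF
  have iF1 := integrable_lip _ hm1 F hF
  have E0 : ∫ x, F x ∂(μ.map f) = ∫ z, F (f z.1) ∂γ := by
    rw [← e0, integral_map hf1.aemeasurable hF.continuous.aestronglyMeasurable]
  have E1 : ∫ x, F x ∂m1 = ∫ z, F z.2 ∂γ := by
    rw [← h2, integral_map measurable_snd.aemeasurable hF.continuous.aestronglyMeasurable]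
  rw [E0, E1, ← integral_sub (I0 F iF0) (I1 F iF1)]
  obtain ⟨x₀, hx₀⟩ := hm0
  refine integral_mono ((I0 F iF0).sub (I1 F iF1)) ?_ ?_
  · refine ((I0 _ hx₀).add (I1 _ (integrable_dist_any m1 hm1 x₀))).mono'
      (hf1.dist measurable_snd).aestronglyMeasurable (.of_forall fun z => ?_)
    rw [Real.norm_of_nonneg dist_nonneg]
    exact dist_triangle_right _ _ _
  · intro z
    have h1 := hF.dist_le_mul (f z.1) z.2
    rw [Real.dist_eq] at h1
    simp only [NNReal.coe_one, one_mul] at h1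
    exact (le_abs_self _).trans h1

theorem exists_quantization {X : Type*} [MetricSpace X] [SecondCountableTopology X]
    [MeasurableSpace X] [BorelSpace X] (m0 m1 : Measure X) [IsProbabilityMeasure m0]
    [IsProbabilityMeasure m1]
    (hm0 : ∃ x₀ : X, Integrable (fun x => dist x x₀) m0)
    (hm1 : ∃ x₀ : X, Integrable (fun x => dist x x₀) m1) (ε : ℝ≥0∞) (hε : 0 < ε) :
    ∃ (N : ℕ) (e : Fin (N + 1) → X) (T : X → Fin (N + 1)), Measurable T ∧
      ∫⁻ x, edist (e (T x)) x ∂m0 < ε ∧ ∫⁻ x, edist (e (T x)) x ∂m1 < ε := by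
  obtain ⟨x₀, -⟩ := id hm0
  have : Nonempty X := ⟨x₀⟩
  let e := TopologicalSpace.denseSeq X
  have key : ∀ m : Measure X, IsProbabilityMeasure m → (∃ x₀ : X, Integrable (fun x => dist x x₀) m) →
      Filter.Tendsto (fun N => ∫⁻ x, edist (SimpleFunc.nearestPt e N x) x ∂m) Filter.atTop (nhds 0) := by
    intro m _ hm
    have hi := integrable_dist_any m hm (e 0)
    have := tendsto_lintegral_of_dominated_convergence (μ := m)
      (F := fun N x => edist (SimpleFunc.nearestPt e N x) x) (f := fun _ => 0)
      (fun x => edist (e 0) x)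
      (fun N => (SimpleFunc.measurable _).edist measurable_id)
      (fun N => .of_forall fun x => SimpleFunc.edist_nearestPt_le e x (Nat.zero_le _)) ?_
      (.of_forall fun x => ?_)
    · simpa using this
    · have h := hi.lintegral_lt_top
      simp only [← edist_dist] at h
      simp only [edist_comm (e 0)]
      exact h.ne
    · have := SimpleFunc.tendsto_nearestPt (e := e) (x := x) (TopologicalSpace.denseRange_denseSeq X x)
      have := (tendsto_iff_edist_tendsto_0.1 this)
      exact this
  obtain ⟨N, h0, h1⟩ := (((key m0 inferInstance hm0).eventually (gt_mem_nhds hε)).and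
    ((key m1 inferInstance hm1).eventually (gt_mem_nhds hε))).exists
  refine ⟨N, fun i => e i, fun x => ⟨SimpleFunc.nearestPtInd e N x, Nat.lt_succ_of_le (SimpleFunc.nearestPtInd_le e N x)⟩, ?_, h0, h1⟩
  refine measurable_to_countable' fun i => ?_
  have := (SimpleFunc.nearestPtInd e N).measurableSet_fiber i
  convert this using 1
  ext x
  simp [Fin.ext_iff]

theorem approx_coupling {A X : Type*} [MeasurableSpace A] [MetricSpace X] [SecondCountableTopology X]
    [MeasurableSpace X] [BorelSpace X] (f : A → X) (hf : Measurable f)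
    (μ : Measure A) (m1 : Measure X) [IsProbabilityMeasure μ] [IsProbabilityMeasure m1]
    (hm0 : ∃ x₀ : X, Integrable (fun x => dist x x₀) (μ.map f))
    (hm1 : ∃ x₀ : X, Integrable (fun x => dist x x₀) m1) (d : ℝ)
    (hd : ∀ F : X → ℝ, LipschitzWith 1 F → ∫ x, F x ∂(μ.map f) - ∫ x, F x ∂m1 ≤ d)
    (ε : ℝ) (hε : 0 < ε) :
    ∃ γ : Measure (A × X), γ.map Prod.fst = μ ∧ γ.map Prod.snd = m1 ∧
      ∫⁻ z, ENNReal.ofReal (dist (f z.1) z.2) ∂γ ≤ ENNReal.ofReal (d + 4 * ε) := by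
  have hP : IsProbabilityMeasure (μ.map f) := Measure.isProbabilityMeasure_map hf.aemeasurable
  obtain ⟨N, e, T, hT, q0, q1⟩ := exists_quantization (μ.map f) m1 hm0 hm1 (ENNReal.ofReal ε)
    (by simpa using hε)
  have heT : Measurable (fun x => e (T x)) := (measurable_of_finite e).comp hT
  have hdm : Measurable (fun x => dist (e (T x)) x) := heT.dist measurable_id
  -- comparison of integrals
  have cmp : ∀ m : Measure X, IsProbabilityMeasure m → (∃ x₀ : X, Integrable (fun x => dist x x₀) m) →
      ∫⁻ x, edist (e (T x)) x ∂m < ENNReal.ofReal ε → ∀ F : X → ℝ, LipschitzWith 1 F →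
      |∫ x, F (e (T x)) ∂m - ∫ x, F x ∂m| ≤ ε := by
    intro m _ hm hq F hF
    simp only [edist_dist] at hq
    have hi : Integrable (fun x => dist (e (T x)) x) m := by
      refine ⟨hdm.aestronglyMeasurable, ?_⟩
      rw [hasFiniteIntegral_iff_ofReal (.of_forall fun x => dist_nonneg)]
      exact hq.trans ENNReal.ofReal_lt_top
    rw [← integral_sub (integrable_finite m T hT (fun i => F (e i))) (integrable_lip m hm F hF)]
    refine (abs_integral_le_integral_abs).trans ?_
    refine (integral_mono_of_nonneg (g := fun x => dist (e (T x)) x)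
      (.of_forall fun x => abs_nonneg _) hi (.of_forall fun x => ?_)).trans ?_
    · have h1 := hF.dist_le_mul (e (T x)) x
      rw [Real.dist_eq] at h1
      simpa using h1
    · rw [integral_eq_lintegral_of_nonneg_ae (.of_forall fun x => dist_nonneg) hdm.aestronglyMeasurable]
      exact (ENNReal.toReal_mono ENNReal.ofReal_ne_top hq.le).trans_eq (ENNReal.toReal_ofReal hε.le)
  have sum1 : ∀ m : Measure X, IsProbabilityMeasure m → ∑ i, m.real (T ⁻¹' {i}) = 1 := by
    intro m _
    have := integral_finite m T hT (fun _ => 1)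
    simpa using this.symm
  obtain ⟨π, π0, π1, π2, π3⟩ := finite_duality (fun i j => dist (e i) (e j))
    (fun i => (μ.map f).real (T ⁻¹' {i})) (fun i => m1.real (T ⁻¹' {i}))
    (fun i => measureReal_nonneg) (fun i => measureReal_nonneg)
    (sum1 _ inferInstance) (sum1 _ inferInstance) (d + 2 * ε) (by
      intro φ ψ h
      let G : X → ℝ := fun x => Finset.univ.inf' Finset.univ_nonempty (fun j => dist x (e j) - ψ j)
      have hG : LipschitzWith 1 G := by
        refine LipschitzWith.of_le_add fun x y => ?_
        rw [← sub_le_iff_le_add]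
        refine Finset.le_inf' _ _ fun j _ => ?_
        have h1 : G x ≤ dist x (e j) - ψ j := Finset.inf'_le _ (Finset.mem_univ j)
        have := dist_triangle x y (e j)
        linarith
      have g1 : ∀ i, φ i ≤ G (e i) := fun i => Finset.le_inf' _ _ fun j _ => by linarith [h i j]
      have g2 : ∀ j, ψ j ≤ - G (e j) := fun j => by
        have h1 : G (e j) ≤ dist (e j) (e j) - ψ j := Finset.inf'_le _ (Finset.mem_univ j)
        rw [dist_self] at h1
        linarith
      have s1 : ∑ i, φ i * (μ.map f).real (T ⁻¹' {i}) ≤ ∫ x, G (e (T x)) ∂(μ.map f) := by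
        rw [integral_finite (μ.map f) T hT (fun i => G (e i))]
        gcongr with i _
        exact g1 i
      have s2 : ∑ i, ψ i * m1.real (T ⁻¹' {i}) ≤ - ∫ x, G (e (T x)) ∂m1 := by
        rw [integral_finite m1 T hT (fun i => G (e i)), ← Finset.sum_neg_distrib]
        simp only [← neg_mul]
        gcongr with i _
        exact g2 i
      have c1 := abs_le.1 (cmp _ inferInstance hm0 q0 G hG)
      have c2 := abs_le.1 (cmp _ inferInstance hm1 q1 G hG)
      have := hd G hG
      linarith [c1.1, c1.2, c2.1, c2.2])
  obtain ⟨γ, γ1, γ2, γ3⟩ := lift_coupling μ m1 (fun a => T (f a)) T (hT.comp hf) hT π π0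
    (fun i => by rw [π1, map_measureReal_apply hf (hT (measurableSet_singleton i))]; rfl)
    π2 (fun i j => dist (e i) (e j)) (fun i j => dist_nonneg)
  refine ⟨γ, γ1, γ2, ?_⟩
  have hem : Measurable (fun x => edist (e (T x)) x) := heT.edist measurable_id
  have hem1 : Measurable (fun z : A × X => edist (e (T (f z.1))) (f z.1)) :=
    hem.comp (hf.comp measurable_fst)
  have hem2 : Measurable (fun z : A × X => edist (e (T z.2)) z.2) := hem.comp measurable_snd
  have b0 : ∫⁻ z, edist (e (T (f z.1))) (f z.1) ∂γ ≤ ENNReal.ofReal ε := by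
    rw [← γ1, Measure.map_map hf measurable_fst, lintegral_map hem (hf.comp measurable_fst)] at q0
    exact q0.le
  have b1 : ∫⁻ z, edist (e (T z.2)) z.2 ∂γ ≤ ENNReal.ofReal ε := by
    rw [← γ2, lintegral_map hem measurable_snd] at q1
    exact q1.le
  have hd0 : 0 ≤ d := by
    have := hd (fun _ => 0) (LipschitzWith.const 0 |>.weaken zero_le_one)
    simpa using this
  simp only [← edist_dist] at γ3 ⊢
  calc ∫⁻ z, edist (f z.1) z.2 ∂γ
      ≤ ∫⁻ z, (edist (e (T (f z.1))) (f z.1) + edist (e (T z.2)) z.2) +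
          edist (e (T (f z.1))) (e (T z.2)) ∂γ := by
        refine lintegral_mono fun z => ?_
        refine (edist_triangle4 (f z.1) (e (T (f z.1))) (e (T z.2)) z.2).trans_eq ?_
        rw [edist_comm (f z.1)]
        ring
    _ = (∫⁻ z, edist (e (T (f z.1))) (f z.1) ∂γ + ∫⁻ z, edist (e (T z.2)) z.2 ∂γ) +
          ENNReal.ofReal (∑ i, ∑ j, π i j * dist (e i) (e j)) := by
        refine (lintegral_add_left (hem1.add hem2) _).trans ?_
        rw [γ3]
        congr 1
        exact lintegral_add_left hem1 _
    _ ≤ (ENNReal.ofReal ε + ENNReal.ofReal ε) + ENNReal.ofReal (d + 2 * ε) := by gcongr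
    _ = ENNReal.ofReal (d + 4 * ε) := by
        rw [← ENNReal.ofReal_add hε.le hε.le, ← ENNReal.ofReal_add (by positivity) (by positivity)]
        congr 1; ring

theorem exists_optimal {A X : Type*} [MetricSpace A] [CompleteSpace A] [SecondCountableTopology A]
    [MeasurableSpace A] [BorelSpace A] [MetricSpace X] [CompleteSpace X] [SecondCountableTopology X]
    [MeasurableSpace X] [BorelSpace X] (f : A → X) (hf : Continuous f)
    (μ : Measure A) (m1 : Measure X) [IsProbabilityMeasure μ] [IsProbabilityMeasure m1]
    (hm0 : ∃ x₀ : X, Integrable (fun x => dist x x₀) (μ.map f))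
    (hm1 : ∃ x₀ : X, Integrable (fun x => dist x x₀) m1) (d : ℝ)
    (hd : ∀ F : X → ℝ, LipschitzWith 1 F → ∫ x, F x ∂(μ.map f) - ∫ x, F x ∂m1 ≤ d) :
    ∃ γ : Measure (A × X), IsProbabilityMeasure γ ∧ γ.map Prod.fst = μ ∧ γ.map Prod.snd = m1 ∧
      ∫ z, dist (f z.1) z.2 ∂γ ≤ d := by
  have hd0 : 0 ≤ d := by
    have := hd (fun _ => 0) (LipschitzWith.const 0 |>.weaken zero_le_one)
    simpa using this
  choose γ γ1 γ2 γ3 using fun n : ℕ => approx_coupling f hf.measurable μ m1 hm0 hm1 d hd (1 / ((n : ℝ) + 1))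
    (by positivity)
  have hγP : ∀ n, IsProbabilityMeasure (γ n) := fun n => by
    have : IsProbabilityMeasure ((γ n).map Prod.fst) := by rw [γ1]; infer_instance
    exact Measure.isProbabilityMeasure_of_map Prod.fst
  let g : ℕ → ProbabilityMeasure (A × X) := fun n => ⟨γ n, hγP n⟩
  have tight : IsTightMeasureSet {((μ : ProbabilityMeasure (A × X)) : Measure (A × X)) | μ ∈ Set.range g} := by
    refine IsTightMeasureSet.prodMk ?_ ?_
    · refine (isTightMeasureSet_singleton (μ := μ)).subset ?_
      rintro _ ⟨_, ⟨_, ⟨n, rfl⟩, rfl⟩, rfl⟩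
      exact γ1 n
    · refine (isTightMeasureSet_singleton (μ := m1)).subset ?_
      rintro _ ⟨_, ⟨_, ⟨n, rfl⟩, rfl⟩, rfl⟩
      exact γ2 n
  obtain ⟨l, -, s, hs, hl⟩ := (isCompact_closure_of_isTightMeasureSet tight).isSeqCompact
    (fun n => subset_closure ⟨n, rfl⟩ : ∀ n, g n ∈ closure (Set.range g))
  have M1 : (l : Measure (A × X)).map Prod.fst = μ := by
    have h1 := ProbabilityMeasure.tendsto_map_of_tendsto_of_continuous _ _ hl (continuous_fst (X := A) (Y := X))
    have h2 : ∀ n, ((g ∘ s) n).map (continuous_fst (X := A) (Y := X)).measurable.aemeasurable = ⟨μ, inferInstance⟩ := by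
      intro n
      apply ProbabilityMeasure.toMeasure_injective
      exact γ1 (s n)
    simp only [h2] at h1
    have := tendsto_nhds_unique h1 tendsto_const_nhds
    exact congrArg ProbabilityMeasure.toMeasure this
  have M2 : (l : Measure (A × X)).map Prod.snd = m1 := by
    have h1 := ProbabilityMeasure.tendsto_map_of_tendsto_of_continuous _ _ hl (continuous_snd (X := A) (Y := X))
    have h2 : ∀ n, ((g ∘ s) n).map (continuous_snd (X := A) (Y := X)).measurable.aemeasurable = ⟨m1, inferInstance⟩ := by
      intro n
      apply ProbabilityMeasure.toMeasure_injective
      exact γ2 (s n)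
    simp only [h2] at h1
    have := tendsto_nhds_unique h1 tendsto_const_nhds
    exact congrArg ProbabilityMeasure.toMeasure this
  have hc : Continuous (fun z : A × X => dist (f z.1) z.2) := by fun_prop
  have hlim := lintegral_le_liminf_lintegral_of_forall_isOpen_measure_le_liminf_measure
    (μ := (l : Measure (A × X))) (μs := fun n => ((g ∘ s) n : Measure (A × X)))
    hc (fun z => dist_nonneg)
    (fun G hG => ProbabilityMeasure.le_liminf_measure_open_of_tendsto hl hG)
  have hten : Filter.Tendsto (fun n => ENNReal.ofReal (d + 4 * (1 / ((s n : ℝ) + 1)))) Filter.atTop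
      (nhds (ENNReal.ofReal d)) := by
    refine ENNReal.tendsto_ofReal ?_
    have := (tendsto_one_div_add_atTop_nhds_zero_nat (𝕜 := ℝ)).comp hs.tendsto_atTop
    simpa using (this.const_mul 4).const_add d
  have hle : ∫⁻ z, ENNReal.ofReal (dist (f z.1) z.2) ∂(l : Measure (A × X)) ≤ ENNReal.ofReal d := by
    refine hlim.trans ?_
    rw [← hten.liminf_eq]
    exact Filter.liminf_le_liminf (.of_forall fun n => γ3 (s n))
  refine ⟨l, inferInstance, M1, M2, ?_⟩
  rw [integral_eq_lintegral_of_nonneg_ae (.of_forall fun x => dist_nonneg) hc.aestronglyMeasurable]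
  exact (ENNReal.toReal_mono ENNReal.ofReal_ne_top hle).trans_eq (ENNReal.toReal_ofReal hd0)

/-- The auxiliary optimal transport problem between `μ̄₀` (a measure on `Z` with first
marginal `m₀`) and `m₁` has a solution, and its value equals the Kantorovich–Rubinstein
distance `d₁(m₀, m₁)`. -/
theorem stmt_10 {X Y : Type*}
    [MetricSpace X] [CompleteSpace X] [SecondCountableTopology X]
    [MeasurableSpace X] [BorelSpace X]
    [MetricSpace Y] [CompleteSpace Y] [SecondCountableTopology Y]
    [MeasurableSpace Y] [BorelSpace Y]
    (Z : Set (X × Y)) (hZ : IsClosed Z)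
    (μ0 : Measure (X × Y)) [IsProbabilityMeasure μ0] (hμ0Z : μ0 Zᶜ = 0)
    (m0 m1 : Measure X) [IsProbabilityMeasure m0] [IsProbabilityMeasure m1]
    (hmarg : μ0.map Prod.fst = m0)
    (hm0 : ∃ x₀ : X, Integrable (fun x => dist x x₀) m0)
    (hm1 : ∃ x₀ : X, Integrable (fun x => dist x x₀) m1)
    (d1 : ℝ)
    (hd1 : d1 = sSup {r | ∃ F : X → ℝ, LipschitzWith 1 F ∧
      r = ∫ x, F x ∂m0 - ∫ x, F x ∂m1}) :
    IsLeast ((fun ν => ∫ p : (X × Y) × X, dist p.1.1 p.2 ∂ν) ''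
      {ν : Measure ((X × Y) × X) | IsProbabilityMeasure ν ∧
        ν.map Prod.fst = μ0 ∧ ν.map Prod.snd = m1}) d1 := by
  subst hmarg
  have hne : Set.Nonempty {r | ∃ F : X → ℝ, LipschitzWith 1 F ∧
      r = ∫ x, F x ∂(μ0.map Prod.fst) - ∫ x, F x ∂m1} :=
    ⟨_, fun _ => 0, LipschitzWith.const 0 |>.weaken zero_le_one, rfl⟩
  have hbdd : BddAbove {r | ∃ F : X → ℝ, LipschitzWith 1 F ∧
      r = ∫ x, F x ∂(μ0.map Prod.fst) - ∫ x, F x ∂m1} := by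
    refine ⟨∫ p : (X × Y) × X, dist p.1.1 p.2 ∂(μ0.prod m1), ?_⟩
    rintro _ ⟨F, hF, rfl⟩
    exact weak_duality Prod.fst measurable_fst μ0 m1 hm0 hm1 (μ0.prod m1)
      (by simp) (by simp) F hF
  have lower : ∀ ν : Measure ((X × Y) × X), ν.map Prod.fst = μ0 → ν.map Prod.snd = m1 →
      d1 ≤ ∫ p : (X × Y) × X, dist p.1.1 p.2 ∂ν := by
    intro ν h1 h2
    rw [hd1]
    refine csSup_le hne ?_
    rintro _ ⟨F, hF, rfl⟩
    exact weak_duality Prod.fst measurable_fst μ0 m1 hm0 hm1 ν h1 h2 F hF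
  obtain ⟨γ, hγ, g1, g2, g3⟩ := exists_optimal (Prod.fst : X × Y → X) continuous_fst μ0 m1 hm0 hm1 d1
    (fun F hF => by rw [hd1]; exact le_csSup hbdd ⟨F, hF, rfl⟩)
  refine ⟨⟨γ, ⟨hγ, g1, g2⟩, le_antisymm g3 (lower γ g1 g2)⟩, ?_⟩
  rintro _ ⟨ν, ⟨_, h1, h2⟩, rfl⟩
  exact lower ν h1 h2
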